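/- arXiv:2310.08428 — 4 statements merged into one kernel-verified Lean document; each statement's English description precedes it below -/
import Mathlib

section
/- Let X be a compact topological space and let A be a subalgebra of the algebra C(X, ℂ) of continuous complex-valued functions on X which contains the constant function 1, is closed under complex conjugation, and is spectrally invariant in C(X): whenever f ∈ A is invertible in C(X, ℂ) (equivalently, f vanishes nowhere on X), the function 1/f also belongs to A. Then every maximal proper ideal I of A is of the form I_p = {f ∈ A : f(p) = 0} for some point p ∈ X. -/
noncomputable section

/-! Finitely many elements `f₁, …, fₙ` of a proper ideal `I` have a common zero: the function
`∑ conj fᵢ * fᵢ = ∑ |fᵢ|²` lies in `I`, so by spectral invariance it is not a unit of `C(X, 𝕜)` and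
vanishes somewhere, which forces every `fᵢ` to vanish there. By compactness all of `I` vanishes at a
single point `p`, that is, `I ≤ I_p`, and maximality of `I` gives equality. -/

theorem exists_forall_eq_zero_of_forall_finset {X E ι : Type*} [TopologicalSpace X] [CompactSpace X]
    [TopologicalSpace E] [T1Space E] [Zero E] (f : ι → C(X, E))
    (hfin : ∀ t : Finset ι, ∃ x, ∀ i ∈ t, f i x = 0) : ∃ x, ∀ i, f i x = 0 := by
  have hclosed (i : ι) : IsClosed (f i ⁻¹' {0}) := isClosed_singleton.preimage (f i).continuous
  have hinter (t : Finset ι) : (Set.univ ∩ ⋂ i ∈ t, f i ⁻¹' {0}).Nonempty := by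
    obtain ⟨x, hx⟩ := hfin t
    exact ⟨x, Set.mem_univ x, Set.mem_iInter₂.2 hx⟩
  obtain ⟨x, -, hx⟩ := isCompact_univ.inter_iInter_nonempty _ hclosed hinter
  exact ⟨x, fun i => Set.mem_iInter.1 hx i⟩

theorem sum_star_mul_self_eq_zero_iff {R ι : Type*} [NonUnitalRing R] [PartialOrder R] [StarRing R]
    [StarOrderedRing R] [NoZeroDivisors R] {t : Finset ι} {f : ι → R} :
    ∑ i ∈ t, star (f i) * f i = 0 ↔ ∀ i ∈ t, f i = 0 := by
  rw [Finset.sum_eq_zero_iff_of_nonneg fun i _ => star_mul_self_nonneg (f i)]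
  simp only [mul_eq_zero, star_eq_zero, or_self]

theorem isUnit_of_isUnit_coe {M S : Type*} [CommMonoid M] [SetLike S M] [SubmonoidClass S M]
    {A : S} (hinv : ∀ a ∈ A, ∀ b : M, a * b = 1 → b ∈ A) {a : A} (ha : IsUnit (a : M)) :
    IsUnit a := by
  obtain ⟨b, hab⟩ := ha.exists_right_inv
  exact IsUnit.of_mul_eq_one ⟨b, hinv a a.2 b hab⟩ (Subtype.ext hab)

section VanishingIdeal

variable {X R S : Type*} [TopologicalSpace X] [CommRing R] [TopologicalSpace R]
  [IsTopologicalRing R] [SetLike S C(X, R)] [SubringClass S C(X, R)]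

/-- The ideal `I_p = {f ∈ A : f p = 0}` of a ring `A` of continuous functions, defined as the kernel
of evaluation at `p`. -/
def vanishingIdealAt (A : S) (p : X) : Ideal A :=
  RingHom.ker ((ContinuousMap.evalAlgHom R R p : C(X, R) →+* R).comp (SubringClass.subtype A))

theorem mem_vanishingIdealAt {A : S} {p : X} {f : A} :
    f ∈ vanishingIdealAt A p ↔ (f : C(X, R)) p = 0 :=
  Iff.rfl

theorem vanishingIdealAt_ne_top [Nontrivial R] (A : S) (p : X) : vanishingIdealAt A p ≠ ⊤ :=
  RingHom.ker_ne_top _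

end VanishingIdeal

theorem exists_eq_zero_of_mem_of_ne_top {X 𝕜 S : Type*} [TopologicalSpace X] [NormedField 𝕜]
    [CompleteSpace 𝕜] [SetLike S C(X, 𝕜)] [SubringClass S C(X, 𝕜)] {A : S}
    (hspec : ∀ f ∈ A, ∀ g : C(X, 𝕜), f * g = 1 → g ∈ A) {I : Ideal A} (hI : I ≠ ⊤)
    {f : A} (hf : f ∈ I) : ∃ x, (f : C(X, 𝕜)) x = 0 := by
  by_contra! hne
  have hunit : IsUnit (f : C(X, 𝕜)) := (ContinuousMap.isUnit_iff_forall_ne_zero _).2 hne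
  exact hI (I.eq_top_of_isUnit_mem hf (isUnit_of_isUnit_coe hspec hunit))

section ConjugationInvariant

variable {X 𝕜 S : Type*} [TopologicalSpace X] [RCLike 𝕜] [SetLike S C(X, 𝕜)]
  [SubringClass S C(X, 𝕜)] {A : S}

open scoped ComplexOrder in
theorem exists_forall_mem_finset_eq_zero (hconj : ∀ f ∈ A, star f ∈ A)
    (hspec : ∀ f ∈ A, ∀ g : C(X, 𝕜), f * g = 1 → g ∈ A) {I : Ideal A} (hI : I ≠ ⊤)
    (t : Finset I) : ∃ x, ∀ f ∈ t, (f : C(X, 𝕜)) x = 0 := by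
  let conj (f : A) : A := ⟨star (f : C(X, 𝕜)), hconj f f.2⟩
  have hmem : ∑ f ∈ t, conj f * f ∈ I := I.sum_mem fun f _ => I.mul_mem_left _ f.2
  obtain ⟨x, hx⟩ := exists_eq_zero_of_mem_of_ne_top hspec hI hmem
  have hsum : ∑ f ∈ t, star ((f : C(X, 𝕜)) x) * (f : C(X, 𝕜)) x = 0 := by
    simpa [conj] using hx
  exact ⟨x, sum_star_mul_self_eq_zero_iff.1 hsum⟩

theorem exists_le_vanishingIdealAt [CompactSpace X] (hconj : ∀ f ∈ A, star f ∈ A)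
    (hspec : ∀ f ∈ A, ∀ g : C(X, 𝕜), f * g = 1 → g ∈ A) {I : Ideal A} (hI : I ≠ ⊤) :
    ∃ p, I ≤ vanishingIdealAt A p := by
  obtain ⟨p, hp⟩ := exists_forall_eq_zero_of_forall_finset (fun f : I => (f : C(X, 𝕜)))
    (exists_forall_mem_finset_eq_zero hconj hspec hI)
  exact ⟨p, fun f hf => mem_vanishingIdealAt.2 (hp ⟨f, hf⟩)⟩

end ConjugationInvariant

theorem stmt_0_general {X 𝕜 S : Type*} [TopologicalSpace X] [CompactSpace X] [RCLike 𝕜]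
    [SetLike S C(X, 𝕜)] [SubringClass S C(X, 𝕜)] (A : S)
    (hconj : ∀ f ∈ A, star f ∈ A)
    (hspec : ∀ f ∈ A, ∀ g : C(X, 𝕜), f * g = 1 → g ∈ A)
    (I : Ideal A) (hI : I.IsMaximal) :
    ∃ p : X, ∀ f : A, f ∈ I ↔ (f : C(X, 𝕜)) p = 0 := by
  obtain ⟨p, hp⟩ := exists_le_vanishingIdealAt hconj hspec hI.ne_top
  have hIp : I = vanishingIdealAt A p := hI.eq_of_le (vanishingIdealAt_ne_top A p) hp
  exact ⟨p, fun f => by rw [hIp, mem_vanishingIdealAt]⟩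

/-- Milnor's exercise: let `X` be a compact topological space and `A` a
subalgebra of `C(X, ℂ)` (so `A` contains the constant function `1`) which is closed under
complex conjugation and spectrally invariant in `C(X, ℂ)` (the inverse of any element of
`A` that is invertible in `C(X, ℂ)` again lies in `A`).  Then every maximal (proper) ideal
`I` of `A` is of the form `I_p = {f ∈ A : f p = 0}` for some point `p ∈ X`. -/
theorem stmt_0 {X : Type*} [TopologicalSpace X] [CompactSpace X]
    (A : Subalgebra ℂ C(X, ℂ))
    (hconj : ∀ f ∈ A, star f ∈ A)
    (hspec : ∀ f ∈ A, ∀ g : C(X, ℂ), f * g = 1 → g ∈ A)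
    (I : Ideal A) (hI : I.IsMaximal) :
    ∃ p : X, ∀ f : A, f ∈ I ↔ (f : C(X, ℂ)) p = 0 :=
  stmt_0_general A hconj hspec I hI
end
end

section
/- Let d ≥ 2 and let e : ℝ^d → ℂ be a smooth function such that every iterated partial derivative of e of order at least 1 is rapidly decreasing, i.e. for every multi-index α ≠ 0 and every N ∈ ℕ there is C > 0 with |∂^α e(x)| ≤ C⟨x⟩^{−N} for all x ∈ ℝ^d. Then there exists a constant c ∈ ℂ such that the function x ↦ e(x) − c is a Schwartz function on ℝ^d. -/
noncomputable section

/-!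
Since `∇e` decays faster than any power, the mean value theorem bounds the dyadic increments
`e (2ⁿ⁺¹ x) - e (2ⁿ x)` by a geometric series, so `e` has a limit along every ray `2ⁿ x` and
converges to it faster than any power of `‖x‖`. The same estimate on the dilates of a ball avoiding
the origin shows that nearby rays have the same limit. In dimension at least two the punctured space
is connected, so the limit is a single constant `c`, and `e - c` is rapidly decreasing.
-/

open Filter Topology
open scoped ContDiff SchwartzMap

/-- A function whose norm decays faster than every power of `‖x‖`. The weight `‖x‖ ^ N` replaces
`⟨x⟩ ^ N`, as in the definition of `SchwartzMap`; the case `N = 0` says that `g` is bounded. -/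
def RapidlyDecreasing {E G : Type*} [Norm E] [Norm G] (g : E → G) : Prop :=
  ∀ N : ℕ, ∃ C : ℝ, ∀ x, ‖x‖ ^ N * ‖g x‖ ≤ C

theorem RapidlyDecreasing.of_norm_le_mul_sqrt_rpow_neg {E G : Type*} [SeminormedAddCommGroup E]
    [SeminormedAddCommGroup G] {g : E → G}
    (hg : ∀ N : ℕ, ∃ C : ℝ, ∀ x, ‖g x‖ ≤ C * √(1 + ‖x‖ ^ 2) ^ (-(N : ℝ))) :
    RapidlyDecreasing g := by
  intro N
  obtain ⟨C, hC⟩ := hg N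
  refine ⟨C, fun x => ?_⟩
  have bracket_pos : 0 < √(1 + ‖x‖ ^ 2) := by positivity
  have norm_le_bracket : ‖x‖ ≤ √(1 + ‖x‖ ^ 2) := Real.le_sqrt_of_sq_le (by linarith)
  calc ‖x‖ ^ N * ‖g x‖ ≤ √(1 + ‖x‖ ^ 2) ^ N * ‖g x‖ := by gcongr
    _ ≤ √(1 + ‖x‖ ^ 2) ^ N * (C * √(1 + ‖x‖ ^ 2) ^ (-(N : ℝ))) := by gcongr; exact hC x
    _ = C := by
      rw [Real.rpow_neg bracket_pos.le, Real.rpow_natCast]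
      field_simp

section Multilinear

variable {𝕜 κ : Type*} [RCLike 𝕜] [Fintype κ] {G : Type*} [NormedAddCommGroup G] [NormedSpace 𝕜 G]

theorem norm_continuousMultilinearMap_le_sum_orthonormalBasis [DecidableEq κ] {V : κ → Type*}
    [∀ i, NormedAddCommGroup (V i)] [∀ i, InnerProductSpace 𝕜 (V i)] {ι : κ → Type*}
    [∀ i, Fintype (ι i)] (b : ∀ i, OrthonormalBasis (ι i) 𝕜 (V i))
    (f : ContinuousMultilinearMap 𝕜 V G) :
    ‖f‖ ≤ ∑ m : ∀ i, ι i, ‖f fun i => b i (m i)‖ := by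
  refine f.opNorm_le_bound (by positivity) fun v => ?_
  have expand : f v = ∑ m : ∀ i, ι i, (∏ i, (b i).repr (v i) (m i)) • f fun i => b i (m i) := by
    conv_lhs => rw [← funext fun i => (b i).sum_repr (v i), f.map_sum]
    exact Finset.sum_congr rfl fun m _ => f.map_smul_univ _ _
  have norm_coord_le (i : κ) (j : ι i) : ‖(b i).repr (v i) j‖ ≤ ‖v i‖ :=
    (PiLp.norm_apply_le _ j).trans_eq ((b i).repr.norm_map (v i))
  rw [expand, Finset.sum_mul]
  refine norm_sum_le_of_le _ fun m _ => ?_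
  rw [norm_smul, mul_comm, norm_prod]
  gcongr with i
  exact norm_coord_le i (m i)

theorem RapidlyDecreasing.of_apply_orthonormalBasis {E V ι : Type*} [SeminormedAddCommGroup E]
    [NormedAddCommGroup V] [InnerProductSpace 𝕜 V] [Fintype ι] (b : OrthonormalBasis ι 𝕜 V)
    {g : E → ContinuousMultilinearMap 𝕜 (fun _ : κ => V) G}
    (hg : ∀ m : κ → ι, RapidlyDecreasing fun x => g x fun i => b (m i)) :
    RapidlyDecreasing g := by
  classical
  intro N
  choose C hC using fun m => hg m N
  refine ⟨∑ m, C m, fun x => ?_⟩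
  calc ‖x‖ ^ N * ‖g x‖ ≤ ‖x‖ ^ N * ∑ m : κ → ι, ‖g x fun i => b (m i)‖ := by
        gcongr
        exact norm_continuousMultilinearMap_le_sum_orthonormalBasis (fun _ => b) (g x)
    _ ≤ ∑ m, C m := by
        rw [Finset.mul_sum]
        exact Finset.sum_le_sum fun m _ => hC m x

end Multilinear

section RadialLimit

variable {E F : Type*} [NormedAddCommGroup E] [NormedSpace ℝ E] [NormedAddCommGroup F]
  [NormedSpace ℝ F] {e : E → F} {N : ℕ} {A : ℝ} {x y : E}

theorem norm_sub_le_of_pow_mul_norm_fderiv_le (he : Differentiable ℝ e)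
    (hA : ∀ x, ‖x‖ ^ N * ‖fderiv ℝ e x‖ ≤ A) {s : Set E} (hs : Convex ℝ s) {ρ : ℝ} (hρ : 0 < ρ)
    (hsρ : ∀ z ∈ s, ρ ≤ ‖z‖) (hx : x ∈ s) (hy : y ∈ s) :
    ‖e y - e x‖ ≤ A / ρ ^ N * ‖y - x‖ := by
  refine hs.norm_image_sub_le_of_norm_fderiv_le (𝕜 := ℝ) (fun z _ => he z) (fun z hz => ?_) hx hy
  rw [le_div_iff₀' (by positivity)]
  refine le_trans ?_ (hA z)
  gcongr
  exact hsρ z hz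

theorem norm_le_of_mem_segment_two_smul {z : E} (hz : z ∈ segment ℝ x ((2 : ℝ) • x)) :
    ‖x‖ ≤ ‖z‖ := by
  rw [segment_eq_image'] at hz
  obtain ⟨t, ht, rfl⟩ := hz
  beta_reduce
  have eq_smul : x + t • ((2 : ℝ) • x - x) = (1 + t) • x := by module
  rw [eq_smul, norm_smul, Real.norm_of_nonneg (by linarith [ht.1])]
  exact le_mul_of_one_le_left (norm_nonneg x) (by linarith [ht.1])

theorem norm_apply_two_smul_sub_le (he : Differentiable ℝ e)
    (hA : ∀ x, ‖x‖ ^ (N + 1) * ‖fderiv ℝ e x‖ ≤ A) (hx : x ≠ 0) :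
    ‖e ((2 : ℝ) • x) - e x‖ ≤ A / ‖x‖ ^ N := by
  have norm_pos : 0 < ‖x‖ := norm_pos_iff.2 hx
  calc ‖e ((2 : ℝ) • x) - e x‖ ≤ A / ‖x‖ ^ (N + 1) * ‖(2 : ℝ) • x - x‖ :=
        norm_sub_le_of_pow_mul_norm_fderiv_le he hA (convex_segment x ((2 : ℝ) • x)) norm_pos
          (fun _ => norm_le_of_mem_segment_two_smul) (left_mem_segment ℝ _ _)
          (right_mem_segment ℝ _ _)
    _ = A / ‖x‖ ^ N := by
        rw [two_smul, add_sub_cancel_right, pow_succ]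
        field_simp

theorem dist_apply_two_pow_smul_succ_le (he : Differentiable ℝ e)
    (hA : ∀ x, ‖x‖ ^ (N + 2) * ‖fderiv ℝ e x‖ ≤ A) (hx : x ≠ 0) (n : ℕ) :
    dist (e ((2 : ℝ) ^ n • x)) (e ((2 : ℝ) ^ (n + 1) • x)) ≤
      2 * A / ‖x‖ ^ (N + 1) / 2 / 2 ^ n := by
  have A_nonneg : 0 ≤ A := le_trans (by positivity) (hA 0)
  have pow_smul_ne_zero : (2 : ℝ) ^ n • x ≠ 0 := smul_ne_zero (by positivity) hx
  rw [dist_comm, dist_eq_norm, pow_succ', mul_smul]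
  calc ‖e ((2 : ℝ) • (2 : ℝ) ^ n • x) - e ((2 : ℝ) ^ n • x)‖
      ≤ A / ‖(2 : ℝ) ^ n • x‖ ^ (N + 1) := norm_apply_two_smul_sub_le he hA pow_smul_ne_zero
    _ = A / ‖x‖ ^ (N + 1) / (2 ^ n) ^ (N + 1) := by
        rw [norm_smul, norm_pow, Real.norm_ofNat, mul_pow]
        field_simp
    _ ≤ A / ‖x‖ ^ (N + 1) / 2 ^ n := by
        gcongr
        exact le_self_pow₀ (one_le_pow₀ one_le_two) N.succ_ne_zero
    _ = 2 * A / ‖x‖ ^ (N + 1) / 2 / 2 ^ n := by field_simp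

theorem pow_mul_norm_sub_le_of_tendsto_two_pow_smul (he : Differentiable ℝ e)
    (hA : ∀ x, ‖x‖ ^ (N + 2) * ‖fderiv ℝ e x‖ ≤ A) (hx : x ≠ 0) {c : F}
    (hc : Tendsto (fun n : ℕ => e ((2 : ℝ) ^ n • x)) atTop (𝓝 c)) :
    ‖x‖ ^ (N + 1) * ‖e x - c‖ ≤ 2 * A := by
  rw [← le_div_iff₀' (by positivity), ← dist_eq_norm]
  simpa only [pow_zero, one_smul] using
    dist_le_of_le_geometric_two_of_tendsto₀ (dist_apply_two_pow_smul_succ_le he hA hx) hc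

theorem tendsto_apply_two_pow_smul_sub (he : Differentiable ℝ e)
    (hA : ∀ x, ‖x‖ ^ 2 * ‖fderiv ℝ e x‖ ≤ A) (hx : x ≠ 0) (hy : y ∈ Metric.ball x (‖x‖ / 2)) :
    Tendsto (fun n : ℕ => e ((2 : ℝ) ^ n • y) - e ((2 : ℝ) ^ n • x)) atTop (𝓝 0) := by
  have norm_pos : 0 < ‖x‖ := norm_pos_iff.2 hx
  have half_norm_le : ∀ z ∈ Metric.ball x (‖x‖ / 2), ‖x‖ / 2 ≤ ‖z‖ := fun z hz => by
    rw [mem_ball_iff_norm'] at hz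
    linarith [norm_sub_norm_le x z]
  have norm_sub_le (n : ℕ) : ‖e ((2 : ℝ) ^ n • y) - e ((2 : ℝ) ^ n • x)‖ ≤
      A / (‖x‖ / 2) ^ 2 * ‖y - x‖ * (1 / 2) ^ n := by
    calc ‖e ((2 : ℝ) ^ n • y) - e ((2 : ℝ) ^ n • x)‖
        ≤ A / (2 ^ n * (‖x‖ / 2)) ^ 2 * ‖(2 : ℝ) ^ n • y - (2 : ℝ) ^ n • x‖ := by
          refine norm_sub_le_of_pow_mul_norm_fderiv_le he hA
            ((convex_ball x (‖x‖ / 2)).smul ((2 : ℝ) ^ n)) (by positivity) ?_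
            (Set.smul_mem_smul_set (Metric.mem_ball_self (half_pos norm_pos)))
            (Set.smul_mem_smul_set hy)
          rintro _ ⟨z, hz, rfl⟩
          simp only [norm_smul, norm_pow, Real.norm_ofNat]
          gcongr
          exact half_norm_le z hz
      _ = A / (‖x‖ / 2) ^ 2 * ‖y - x‖ * (1 / 2) ^ n := by
          rw [← smul_sub, norm_smul, norm_pow, Real.norm_ofNat, one_div_pow]
          field_simp
  refine squeeze_zero_norm norm_sub_le ?_
  have half_pow_tendsto : Tendsto (fun n : ℕ => (1 / 2 : ℝ) ^ n) atTop (𝓝 0) :=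
    tendsto_pow_atTop_nhds_zero_of_lt_one one_half_pos.le one_half_lt_one
  simpa only [mul_zero] using half_pow_tendsto.const_mul (A / (‖x‖ / 2) ^ 2 * ‖y - x‖)

theorem tendsto_apply_two_pow_smul_sub_of_one_lt_rank (hE : 1 < Module.rank ℝ E)
    (he : Differentiable ℝ e) (hA : ∀ x, ‖x‖ ^ 2 * ‖fderiv ℝ e x‖ ≤ A) (hx : x ≠ 0) (hy : y ≠ 0) :
    Tendsto (fun n : ℕ => e ((2 : ℝ) ^ n • y) - e ((2 : ℝ) ^ n • x)) atTop (𝓝 0) := by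
  have punctured_preconnected : IsPreconnected ({0}ᶜ : Set E) :=
    (isConnected_compl_singleton_of_one_lt_rank hE 0).isPreconnected
  refine punctured_preconnected.induction₂
    (fun x y => Tendsto (fun n : ℕ => e ((2 : ℝ) ^ n • y) - e ((2 : ℝ) ^ n • x)) atTop (𝓝 0))
    (fun z hz => ?_) (fun u v w _ _ _ huv hvw => ?_) (fun u v _ _ huv => ?_) hx hy
  · filter_upwards [mem_nhdsWithin_of_mem_nhds
      (Metric.ball_mem_nhds z (half_pos (norm_pos_iff.2 hz)))] with w hw
    exact tendsto_apply_two_pow_smul_sub he hA hz hw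
  · simpa only [sub_add_sub_cancel, add_zero] using hvw.add huv
  · simpa only [neg_sub, neg_zero] using huv.neg

theorem exists_forall_tendsto_two_pow_smul [CompleteSpace F] (hE : 1 < Module.rank ℝ E)
    (he : Differentiable ℝ e) (hA : ∀ x, ‖x‖ ^ 2 * ‖fderiv ℝ e x‖ ≤ A) :
    ∃ c : F, ∀ x ≠ 0, Tendsto (fun n : ℕ => e ((2 : ℝ) ^ n • x)) atTop (𝓝 c) := by
  obtain ⟨x₀, hx₀⟩ := (isConnected_compl_singleton_of_one_lt_rank hE (0 : E)).nonempty
  obtain ⟨c, hc⟩ := cauchySeq_tendsto_of_complete (cauchySeq_of_le_geometric_two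
    (dist_apply_two_pow_smul_succ_le (N := 0) he hA hx₀))
  refine ⟨c, fun x hx => ?_⟩
  simpa only [sub_add_cancel, zero_add] using
    (tendsto_apply_two_pow_smul_sub_of_one_lt_rank hE he hA hx₀ hx).add hc

theorem exists_norm_le_of_norm_fderiv_le (he : Differentiable ℝ e) (hA : ∀ x, ‖fderiv ℝ e x‖ ≤ A)
    (R : ℝ) : ∃ B, ∀ x, ‖x‖ ≤ R → ‖e x‖ ≤ B := by
  have A_nonneg : 0 ≤ A := (norm_nonneg _).trans (hA 0)
  refine ⟨‖e 0‖ + A * R, fun x hx => ?_⟩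
  calc ‖e x‖ ≤ ‖e 0‖ + ‖e x - e 0‖ := norm_le_norm_add_norm_sub' _ _
    _ ≤ ‖e 0‖ + A * ‖x - 0‖ := by
        gcongr
        exact convex_univ.norm_image_sub_le_of_norm_fderiv_le (𝕜 := ℝ) (fun z _ => he z)
          (fun z _ => hA z) trivial trivial
    _ ≤ ‖e 0‖ + A * R := by
        rw [sub_zero]
        gcongr

theorem exists_rapidlyDecreasing_sub_const [CompleteSpace F] (hE : 1 < Module.rank ℝ E)
    (he : Differentiable ℝ e) (hdecay : RapidlyDecreasing (fderiv ℝ e)) :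
    ∃ c : F, RapidlyDecreasing fun x => e x - c := by
  obtain ⟨A₂, hA₂⟩ := hdecay 2
  obtain ⟨c, hc⟩ := exists_forall_tendsto_two_pow_smul hE he hA₂
  obtain ⟨A₀, hA₀⟩ := hdecay 0
  obtain ⟨B, hB⟩ := exists_norm_le_of_norm_fderiv_le (he.sub_const c) (A := A₀)
    (fun x => by simpa only [fderiv_sub_const, pow_zero, one_mul] using hA₀ x) 1
  refine ⟨c, fun N => ?_⟩
  obtain ⟨A, hA⟩ := hdecay (N + 2)
  refine ⟨max B (2 * A), fun x => ?_⟩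
  rcases le_total ‖x‖ 1 with norm_le_one | one_le_norm
  · exact (mul_le_of_le_one_left (norm_nonneg _) (pow_le_one₀ (norm_nonneg x) norm_le_one)).trans
      ((hB x norm_le_one).trans (le_max_left _ _))
  · have hx : x ≠ 0 := norm_pos_iff.1 (one_pos.trans_le one_le_norm)
    calc ‖x‖ ^ N * ‖e x - c‖ ≤ ‖x‖ ^ (N + 1) * ‖e x - c‖ := by
          gcongr
          exact N.le_succ
      _ ≤ 2 * A := pow_mul_norm_sub_le_of_tendsto_two_pow_smul he hA hx (hc x hx)
      _ ≤ max B (2 * A) := le_max_right _ _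

end RadialLimit

theorem stmt_1_general {E F : Type*} [NormedAddCommGroup E] [NormedSpace ℝ E]
    [NormedAddCommGroup F] [NormedSpace ℝ F] [CompleteSpace F] (hE : 1 < Module.rank ℝ E)
    {e : E → F} (he : ContDiff ℝ ∞ e)
    (hdecay : ∀ k : ℕ, 1 ≤ k → RapidlyDecreasing (iteratedFDeriv ℝ k e)) :
    ∃ c : F, ∃ f : 𝓢(E, F), ∀ x, f x = e x - c := by
  have fderiv_decay : RapidlyDecreasing (fderiv ℝ e) := by
    simpa only [RapidlyDecreasing, norm_iteratedFDeriv_one] using hdecay 1 le_rfl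
  obtain ⟨c, hc⟩ :=
    exists_rapidlyDecreasing_sub_const hE (he.differentiable (by simp)) fderiv_decay
  refine ⟨c, ⟨fun x => e x - c, he.sub contDiff_const, fun N k => ?_⟩, fun _ => rfl⟩
  cases k with
  | zero => simpa only [norm_iteratedFDeriv_zero] using hc N
  | succ k =>
    have fderiv_eq : fderiv ℝ (fun x => e x - c) = fderiv ℝ e := funext fun _ => fderiv_sub_const c
    simpa only [← norm_iteratedFDeriv_fderiv, fderiv_eq] using hdecay (k + 1) (by lia) N

/-- if `e : ℝ^d → ℂ` (`d ≥ 2`) is smooth and every iterated partial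
derivative of order at least one is rapidly decreasing (bounded by `C ⟨x⟩^{−N}` for every
`N`), then there is a constant `c ∈ ℂ` such that `x ↦ e x − c` is a Schwartz function.
Mixed partial derivatives are encoded as the iterated Fréchet derivative evaluated at
tuples of coordinate directions. -/
theorem stmt_1 (d : ℕ) (hd : 2 ≤ d) (e : EuclideanSpace ℝ (Fin d) → ℂ)
    (he : ContDiff ℝ (⊤ : ℕ∞) e)
    (hdecay : ∀ k : ℕ, 1 ≤ k → ∀ m : Fin k → Fin d, ∀ N : ℕ, ∃ C : ℝ, 0 < C ∧
      ∀ x : EuclideanSpace ℝ (Fin d),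
        ‖iteratedFDeriv ℝ k e x (fun i => EuclideanSpace.single (m i) 1)‖ ≤
          C * Real.sqrt (1 + ‖x‖ ^ 2) ^ (-(N : ℝ))) :
    ∃ c : ℂ, ∃ f : SchwartzMap (EuclideanSpace ℝ (Fin d)) ℂ, ∀ x, f x = e x - c := by
  have one_lt_rank : 1 < Module.rank ℝ (EuclideanSpace ℝ (Fin d)) := by
    simpa [← Module.finrank_eq_rank] using Nat.lt_of_succ_le hd
  exact stmt_1_general one_lt_rank he fun k hk =>
    .of_apply_orthonormalBasis (EuclideanSpace.basisFun (Fin d) ℝ) fun m =>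
      .of_norm_le_mul_sqrt_rpow_neg fun N => (hdecay k hk m N).imp fun C hC => by
        simpa only [EuclideanSpace.basisFun_apply] using hC.2
end
end

section
/- Let k, k' ∈ ℝ and let a, b : ℝⁿ × ℝⁿ → ℂ be smooth functions satisfying SG estimates of orders (1, k) and (1, k'), respectively. Let a_e, b_e : (ℝⁿ \ {0}) × ℝⁿ → ℂ be smooth and positively homogeneous of degree 1 in the first variable (a_e(λx,ξ) = λ a_e(x,ξ) for λ > 0, and likewise for b_e). Let χ : ℝⁿ → ℝ be smooth with χ(x) = 0 for |x| ≤ 1 and χ(x) = 1 for |x| ≥ 2, and assume that a − χ(x)a_e and b − χ(x)b_e satisfy SG estimates of orders (0, k) and (0, k'), respectively. Then for every x ≠ 0 and every ξ ∈ ℝⁿ, lim_{λ→∞} λ^{−1} {a, b}(λx, ξ) = {a_e, b_e}(x, ξ); that is, the exit principal symbol of the Poisson bracket is the Poisson bracket of the exit principal symbols. -/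
noncomputable section

open scoped BigOperators

/-- The Japanese bracket `⟨x⟩ = (1+|x|²)^{1/2}`. -/
def jb {d : ℕ} (x : EuclideanSpace ℝ (Fin d)) : ℝ := Real.sqrt (1 + ‖x‖ ^ 2)

/-- Coordinate directions in the product space `ℝⁿ × ℝᴺ`. -/
def sgDir (n N : ℕ) : Fin n ⊕ Fin N → EuclideanSpace ℝ (Fin n) × EuclideanSpace ℝ (Fin N)
  | Sum.inl i => (EuclideanSpace.single i 1, 0)
  | Sum.inr j => (0, EuclideanSpace.single j 1)

/-- `a : ℝⁿ × ℝᴺ → ℂ` is smooth and satisfies SG estimates of order `(me, mψ)`: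
every mixed partial derivative `∂_x^α ∂_ξ^β a` is bounded by
`C ⟨x⟩^(me - |α|) ⟨ξ⟩^(mψ - |β|)`.  Mixed partial derivatives are encoded as the
iterated Fréchet derivative evaluated at a tuple of coordinate directions. -/
def IsSG (n N : ℕ) (me mψ : ℝ)
    (a : EuclideanSpace ℝ (Fin n) × EuclideanSpace ℝ (Fin N) → ℂ) : Prop :=
  ContDiff ℝ (⊤ : ℕ∞) a ∧
    ∀ (k : ℕ) (m : Fin k → Fin n ⊕ Fin N), ∃ C : ℝ, 0 < C ∧
      ∀ (x : EuclideanSpace ℝ (Fin n)) (ξ : EuclideanSpace ℝ (Fin N)),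
        ‖iteratedFDeriv ℝ k a (x, ξ) (fun i => sgDir n N (m i))‖ ≤
          C * jb x ^ (me - ((Finset.univ.filter fun i => (m i).isLeft = true).card : ℝ)) *
            jb ξ ^ (mψ - ((Finset.univ.filter fun i => (m i).isRight = true).card : ℝ))


/-- The Poisson bracket `{a,b} = Σᵢ (∂a/∂ξᵢ ∂b/∂xᵢ − ∂a/∂xᵢ ∂b/∂ξᵢ)` of two functions on
`ℝⁿ × ℝⁿ`, with partial derivatives expressed via the Fréchet derivative. -/
def poissonBracket (n : ℕ)
    (a b : EuclideanSpace ℝ (Fin n) × EuclideanSpace ℝ (Fin n) → ℂ)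
    (p : EuclideanSpace ℝ (Fin n) × EuclideanSpace ℝ (Fin n)) : ℂ :=
  ∑ i : Fin n,
    (fderiv ℝ a p (0, EuclideanSpace.single i 1) * fderiv ℝ b p (EuclideanSpace.single i 1, 0) -
      fderiv ℝ a p (EuclideanSpace.single i 1, 0) * fderiv ℝ b p (0, EuclideanSpace.single i 1))

/-!
Along the ray `l ↦ (l x, ξ)` a function homogeneous of degree `m` in `x` has `∂_x`-derivatives
that scale like `l ^ (m - 1)` and `∂_ξ`-derivatives that scale like `l ^ m`, whereas the
corresponding derivatives of a remainder of exit order `m - 1` are smaller by a factor `l⁻¹`.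
Hence every first derivative of a symbol, rescaled by its order, converges to that of its exit
principal symbol. Each term of the Poisson bracket pairs one `∂_x` with one `∂_ξ`, so for symbols
of exit orders `m₁` and `m₂` the whole bracket rescales by the single power `l ^ (m₁ + m₂ - 1)`.
-/

open Filter Topology

section Homogeneous

variable {E F G : Type*} [NormedAddCommGroup E] [NormedSpace ℝ E] [NormedAddCommGroup F]
  [NormedSpace ℝ F] [NormedAddCommGroup G] [NormedSpace ℝ G]

/-- Positive homogeneity of degree `m` in the first variable. Only points with nonzero first
component are constrained, so values at `x = 0` are irrelevant. -/
def IsHomogeneousFst (m : ℝ) (f : E × F → G) : Prop :=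
  ∀ l : ℝ, 0 < l → ∀ x : E, x ≠ 0 → ∀ ξ : F, f (l • x, ξ) = l ^ m • f (x, ξ)

lemma IsHomogeneousFst.fderiv_smul_apply {m : ℝ} {f : E × F → G} (hf : IsHomogeneousFst m f)
    {l : ℝ} (hl : 0 < l) {x : E} (hx : x ≠ 0) (ξ : F) (u : E) (v : F) :
    fderiv ℝ f (l • x, ξ) (l • u, v) = l ^ m • fderiv ℝ f (x, ξ) (u, v) := by
  let dilation : (E × F) ≃L[ℝ] E × F :=
    (ContinuousLinearEquiv.smulLeft (Units.mk0 l hl.ne')).prodCongr (.refl ℝ F)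
  have comp_dilation : f ∘ dilation =ᶠ[𝓝 (x, ξ)] l ^ m • f := by
    filter_upwards [continuousAt_fst.eventually_ne hx] with p hp
    exact hf l hl p.1 hp p.2
  have fderiv_eq := comp_dilation.fderiv_eq (𝕜 := ℝ)
  rw [dilation.comp_right_fderiv, fderiv_const_smul_field] at fderiv_eq
  exact congrArg (· (u, v)) fderiv_eq

end Homogeneous

section JapaneseBracket

variable {d : ℕ}

lemma tendsto_jb_smul_div (x : EuclideanSpace ℝ (Fin d)) :
    Tendsto (fun l : ℝ => jb (l • x) / l) atTop (𝓝 ‖x‖) := by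
  have sqrt_lim : Tendsto (fun l : ℝ => √(l⁻¹ ^ 2 + ‖x‖ ^ 2)) atTop (𝓝 ‖x‖) := by
    have radicand_lim := (tendsto_inv_atTop_zero (𝕜 := ℝ)).pow 2 |>.add_const (‖x‖ ^ 2)
    rw [zero_pow two_ne_zero, zero_add] at radicand_lim
    simpa only [Real.sqrt_sq (norm_nonneg x)] using radicand_lim.sqrt
  refine sqrt_lim.congr' ?_
  filter_upwards [eventually_gt_atTop 0] with l hl
  have radicand_eq : l⁻¹ ^ 2 + ‖x‖ ^ 2 = (1 + ‖l • x‖ ^ 2) / l ^ 2 := by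
    rw [norm_smul, Real.norm_of_nonneg hl.le]
    field_simp
  rw [radicand_eq, Real.sqrt_div' _ (sq_nonneg l), Real.sqrt_sq hl.le, jb]

lemma tendsto_jb_smul_rpow_div_rpow {x : EuclideanSpace ℝ (Fin d)} (hx : x ≠ 0) {s t : ℝ}
    (hst : s < t) :
    Tendsto (fun l : ℝ => jb (l • x) ^ s / l ^ t) atTop (𝓝 0) := by
  have ratio_lim : Tendsto (fun l : ℝ => (jb (l • x) / l) ^ s) atTop (𝓝 (‖x‖ ^ s)) :=
    (tendsto_jb_smul_div x).rpow_const (.inl (norm_ne_zero_iff.mpr hx))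
  have power_lim : Tendsto (fun l : ℝ => l ^ (-(t - s))) atTop (𝓝 0) :=
    tendsto_rpow_neg_atTop (sub_pos.mpr hst)
  have prod_lim := ratio_lim.mul power_lim
  rw [mul_zero] at prod_lim
  refine prod_lim.congr' ?_
  filter_upwards [eventually_gt_atTop 0] with l hl
  have jb_nonneg : 0 ≤ jb (l • x) := Real.sqrt_nonneg _
  rw [Real.div_rpow jb_nonneg hl.le, neg_sub, Real.rpow_sub hl]
  field_simp

end JapaneseBracket

section ExitSymbol

variable {n N : ℕ} {m m' k k' : ℝ}

/-- The order in `x` of `∂_d a` for a symbol `a` of order `m` in `x`: differentiating in an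
`x`-direction lowers it by one, differentiating in a `ξ`-direction does not change it. -/
def exitOrder (m : ℝ) : Fin n ⊕ Fin N → ℝ :=
  Sum.elim (fun _ => m - 1) (fun _ => m)

lemma IsHomogeneousFst.fderiv_sgDir {G : Type*} [NormedAddCommGroup G] [NormedSpace ℝ G]
    {f : EuclideanSpace ℝ (Fin n) × EuclideanSpace ℝ (Fin N) → G} (hf : IsHomogeneousFst m f)
    {l : ℝ} (hl : 0 < l) {x : EuclideanSpace ℝ (Fin n)} (hx : x ≠ 0)
    (ξ : EuclideanSpace ℝ (Fin N)) (d : Fin n ⊕ Fin N) :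
    fderiv ℝ f (l • x, ξ) (sgDir n N d) =
      l ^ exitOrder m d • fderiv ℝ f (x, ξ) (sgDir n N d) := by
  rcases d with i | j
  · have scaled := hf.fderiv_smul_apply hl hx ξ (l⁻¹ • EuclideanSpace.single i 1) 0
    rw [smul_inv_smul₀ hl.ne', ← smul_zero (A := EuclideanSpace ℝ (Fin N)) l⁻¹, ← Prod.smul_mk,
      map_smul, smul_smul, smul_zero] at scaled
    simpa only [sgDir, exitOrder, Sum.elim_inl, Real.rpow_sub_one hl.ne', div_eq_mul_inv]
      using scaled
  · simpa only [sgDir, exitOrder, Sum.elim_inr, smul_zero]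
      using hf.fderiv_smul_apply hl hx ξ 0 (EuclideanSpace.single j 1)

lemma IsSG.exists_norm_fderiv_sgDir_le
    {a : EuclideanSpace ℝ (Fin n) × EuclideanSpace ℝ (Fin N) → ℂ} (ha : IsSG n N m k a)
    (d : Fin n ⊕ Fin N) (ξ : EuclideanSpace ℝ (Fin N)) :
    ∃ C : ℝ, ∀ x, ‖fderiv ℝ a (x, ξ) (sgDir n N d)‖ ≤ C * jb x ^ exitOrder m d := by
  obtain ⟨C, -, bound⟩ := ha.2 1 fun _ => d
  rcases d with i | j
  · refine ⟨C * jb ξ ^ k, fun x => ?_⟩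
    simpa [exitOrder, mul_right_comm] using bound x ξ
  · refine ⟨C * jb ξ ^ (k - 1), fun x => ?_⟩
    simpa [exitOrder, mul_right_comm] using bound x ξ

lemma IsSG.tendsto_fderiv_sgDir_zero
    {r : EuclideanSpace ℝ (Fin n) × EuclideanSpace ℝ (Fin N) → ℂ} (hr : IsSG n N m' k r)
    (hm : m' < m) (d : Fin n ⊕ Fin N) {x : EuclideanSpace ℝ (Fin n)} (hx : x ≠ 0)
    (ξ : EuclideanSpace ℝ (Fin N)) :
    Tendsto (fun l : ℝ => (l ^ exitOrder m d)⁻¹ • fderiv ℝ r (l • x, ξ) (sgDir n N d))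
      atTop (𝓝 0) := by
  obtain ⟨C, bound⟩ := hr.exists_norm_fderiv_sgDir_le d ξ
  have exitOrder_lt : exitOrder m' d < exitOrder m d := by
    rcases d with i | j <;> simpa [exitOrder] using hm
  have majorant_lim := (tendsto_jb_smul_rpow_div_rpow hx exitOrder_lt).const_mul C
  rw [mul_zero] at majorant_lim
  refine squeeze_zero_norm' ?_ majorant_lim
  filter_upwards [eventually_gt_atTop 0] with l hl
  have power_pos : 0 < l ^ exitOrder m d := Real.rpow_pos_of_pos hl _
  rw [norm_smul, norm_inv, Real.norm_of_nonneg power_pos.le, ← mul_div_assoc, inv_mul_eq_div]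
  gcongr
  exact bound (l • x)

/-- `ae` is an exit principal symbol, of degree `m`, of `a`: it is homogeneous of degree `m` in `x`
and the two differ by an SG symbol of order `(m - 1, k)`. Instead of multiplying `ae` by a cutoff
that removes the singularity at `x = 0`, `a - ae` is required to agree with such a symbol for
large `x`. Regularity of `ae` means differentiability off `x = 0`. -/
structure IsExitPrincipalSymbol (m k : ℝ)
    (a ae : EuclideanSpace ℝ (Fin n) × EuclideanSpace ℝ (Fin N) → ℂ) : Prop where
  differentiableOn : DifferentiableOn ℝ ae {p | p.1 ≠ 0}
  homogeneous : IsHomogeneousFst m ae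
  exists_remainder : ∃ r, IsSG n N (m - 1) k r ∧
    ∃ R : ℝ, ∀ x ξ, R ≤ ‖x‖ → a (x, ξ) = r (x, ξ) + ae (x, ξ)

namespace IsExitPrincipalSymbol

lemma of_cutoff {a ae : EuclideanSpace ℝ (Fin n) × EuclideanSpace ℝ (Fin N) → ℂ}
    (hae : DifferentiableOn ℝ ae {p | p.1 ≠ 0}) (hom : IsHomogeneousFst m ae)
    {χ : EuclideanSpace ℝ (Fin n) → ℝ} {R : ℝ} (hχ : ∀ x, R ≤ ‖x‖ → χ x = 1)
    (hrem : IsSG n N (m - 1) k fun p => a p - (χ p.1 : ℂ) * ae p) :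
    IsExitPrincipalSymbol m k a ae :=
  ⟨hae, hom, _, hrem, R, fun x ξ hx => by simp [hχ x hx]⟩

variable {a ae : EuclideanSpace ℝ (Fin n) × EuclideanSpace ℝ (Fin N) → ℂ}

lemma exists_fderiv_eq_add (ha : IsExitPrincipalSymbol m k a ae) :
    ∃ r, IsSG n N (m - 1) k r ∧ ∀ x, x ≠ 0 → ∀ ξ, ∀ᶠ l : ℝ in atTop,
      fderiv ℝ a (l • x, ξ) = fderiv ℝ r (l • x, ξ) + fderiv ℝ ae (l • x, ξ) := by
  obtain ⟨r, hr, R, a_eq⟩ := ha.exists_remainder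
  refine ⟨r, hr, fun x hx ξ => ?_⟩
  filter_upwards [eventually_gt_atTop 0, eventually_gt_atTop (R / ‖x‖)] with l l_pos l_large
  have hlx : R < ‖l • x‖ := by
    rw [norm_smul, Real.norm_of_nonneg l_pos.le]
    exact (div_lt_iff₀ (norm_pos_iff.mpr hx)).mp l_large
  have a_eventuallyEq : a =ᶠ[𝓝 (l • x, ξ)] r + ae := by
    filter_upwards [continuousAt_fst.norm.eventually_const_lt hlx] with p hp
    exact a_eq p.1 p.2 hp.le
  have ae_differentiableAt : DifferentiableAt ℝ ae (l • x, ξ) :=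
    ha.differentiableOn.differentiableAt
      (continuousAt_fst.eventually_ne (smul_ne_zero l_pos.ne' hx))
  rw [a_eventuallyEq.fderiv_eq, fderiv_add (hr.1.differentiable (by simp) _) ae_differentiableAt]

theorem tendsto_fderiv_sgDir (ha : IsExitPrincipalSymbol m k a ae) (d : Fin n ⊕ Fin N)
    {x : EuclideanSpace ℝ (Fin n)} (hx : x ≠ 0) (ξ : EuclideanSpace ℝ (Fin N)) :
    Tendsto (fun l : ℝ => (l ^ exitOrder m d)⁻¹ • fderiv ℝ a (l • x, ξ) (sgDir n N d))
      atTop (𝓝 (fderiv ℝ ae (x, ξ) (sgDir n N d))) := by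
  obtain ⟨r, hr, fderiv_eq_add⟩ := ha.exists_fderiv_eq_add
  have remainder_lim := hr.tendsto_fderiv_sgDir_zero (sub_one_lt m) d hx ξ
  have sum_lim := remainder_lim.add_const (fderiv ℝ ae (x, ξ) (sgDir n N d))
  rw [zero_add] at sum_lim
  refine sum_lim.congr' ?_
  filter_upwards [fderiv_eq_add x hx ξ, eventually_gt_atTop 0] with l h_add hl
  rw [h_add, add_apply, smul_add, ha.homogeneous.fderiv_sgDir hl hx,
    inv_smul_smul₀ (Real.rpow_pos_of_pos hl _).ne']

end IsExitPrincipalSymbol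

theorem stmt_16_general {a b ae be : EuclideanSpace ℝ (Fin n) × EuclideanSpace ℝ (Fin n) → ℂ}
    (ha : IsExitPrincipalSymbol m k a ae) (hb : IsExitPrincipalSymbol m' k' b be)
    {x : EuclideanSpace ℝ (Fin n)} (hx : x ≠ 0) (ξ : EuclideanSpace ℝ (Fin n)) :
    Tendsto (fun l : ℝ => (l ^ (m + m' - 1))⁻¹ • poissonBracket n a b (l • x, ξ))
      atTop (𝓝 (poissonBracket n ae be (x, ξ))) := by
  have bracket_lim := tendsto_finsetSum Finset.univ fun (i : Fin n) _ =>
    ((ha.tendsto_fderiv_sgDir (.inr i) hx ξ).mul (hb.tendsto_fderiv_sgDir (.inl i) hx ξ)).sub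
      ((ha.tendsto_fderiv_sgDir (.inl i) hx ξ).mul (hb.tendsto_fderiv_sgDir (.inr i) hx ξ))
  refine bracket_lim.congr' ?_
  filter_upwards [eventually_gt_atTop 0] with l hl
  have split_right : l ^ (m + m' - 1) = l ^ m * l ^ (m' - 1) := by
    rw [← Real.rpow_add hl, add_sub_assoc]
  have split_left : l ^ (m + m' - 1) = l ^ (m - 1) * l ^ m' := by
    rw [← Real.rpow_add hl, sub_add_eq_add_sub]
  simp only [poissonBracket, exitOrder, Sum.elim_inl, Sum.elim_inr, sgDir, Finset.smul_sum,
    smul_sub, smul_mul_smul_comm, ← mul_inv, ← split_right, ← split_left]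

end ExitSymbol

/-- the exit principal symbol of the Poisson bracket is the Poisson bracket
of the exit principal symbols: if `a, b` are SG symbols of orders `(1,k)` and `(1,k')`,
with exit principal symbols `a_e, b_e` (homogeneous of degree `1` in `x`, with remainders
`a − χ a_e`, `b − χ b_e` of orders `(0,k)`, `(0,k')`), then for `x ≠ 0` and all `ξ`,
`λ^{−1} {a,b}(λx, ξ) → {a_e, b_e}(x, ξ)` as `λ → ∞`. -/
theorem stmt_16 (n : ℕ) (k k' : ℝ)
    (a b ae be : EuclideanSpace ℝ (Fin n) × EuclideanSpace ℝ (Fin n) → ℂ)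
    (ha : IsSG n n 1 k a) (hb : IsSG n n 1 k' b)
    (hae : ContDiffOn ℝ (⊤ : ℕ∞) ae
      {p : EuclideanSpace ℝ (Fin n) × EuclideanSpace ℝ (Fin n) | p.1 ≠ 0})
    (hbe : ContDiffOn ℝ (⊤ : ℕ∞) be
      {p : EuclideanSpace ℝ (Fin n) × EuclideanSpace ℝ (Fin n) | p.1 ≠ 0})
    (haehom : ∀ l : ℝ, 0 < l → ∀ x : EuclideanSpace ℝ (Fin n), x ≠ 0 →
      ∀ ξ : EuclideanSpace ℝ (Fin n), ae (l • x, ξ) = (l : ℂ) * ae (x, ξ))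
    (hbehom : ∀ l : ℝ, 0 < l → ∀ x : EuclideanSpace ℝ (Fin n), x ≠ 0 →
      ∀ ξ : EuclideanSpace ℝ (Fin n), be (l • x, ξ) = (l : ℂ) * be (x, ξ))
    (χ : EuclideanSpace ℝ (Fin n) → ℝ)
    (hχsmooth : ContDiff ℝ (⊤ : ℕ∞) χ)
    (hχ0 : ∀ x : EuclideanSpace ℝ (Fin n), ‖x‖ ≤ 1 → χ x = 0)
    (hχ1 : ∀ x : EuclideanSpace ℝ (Fin n), 2 ≤ ‖x‖ → χ x = 1)
    (hrema : IsSG n n 0 k (fun p => a p - (χ p.1 : ℂ) * ae p))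
    (hremb : IsSG n n 0 k' (fun p => b p - (χ p.1 : ℂ) * be p)) :
    ∀ x : EuclideanSpace ℝ (Fin n), x ≠ 0 → ∀ ξ : EuclideanSpace ℝ (Fin n),
      Filter.Tendsto (fun l : ℝ => (l : ℂ)⁻¹ * poissonBracket n a b (l • x, ξ))
        Filter.atTop (nhds (poissonBracket n ae be (x, ξ))) := by
  intro x hx ξ
  have ha_symbol : IsExitPrincipalSymbol 1 k a ae :=
    .of_cutoff (hae.differentiableOn (by simp)) (by simpa [IsHomogeneousFst] using haehom) hχ1
      (by simpa using hrema)
  have hb_symbol : IsExitPrincipalSymbol 1 k' b be :=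
    .of_cutoff (hbe.differentiableOn (by simp)) (by simpa [IsHomogeneousFst] using hbehom) hχ1
      (by simpa using hremb)
  simpa using stmt_16_general ha_symbol hb_symbol hx ξ
end
end

section
/- Let n ≥ 2 and let γ^1, …, γ^n and ρ_1, …, ρ_n be smooth complex-valued functions on ℝⁿ × (ℝⁿ \ {0}) (variables (x, ξ)) such that, for all μ > 0, γ^k(x, μξ) = μ^{−1} γ^k(x,ξ) and ρ_k(x, μξ) = ρ_k(x,ξ), and such that at every point the symmetry relations ∂γ^i/∂ξ_j = ∂γ^j/∂ξ_i and ∂γ^i/∂x_j = −∂ρ_j/∂ξ_i hold for all i, j. Then the function (x,ξ) ↦ Σ_{k=1}^n ξ_k γ^k(x,ξ) has vanishing differential on ℝⁿ × (ℝⁿ \ {0}), and hence is constant. -/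
noncomputable section

open scoped BigOperators

/-- Partial derivative in the `x`-variables of a function on `ℝⁿ × ℝⁿ`. -/
def Dx (n : ℕ) (f : EuclideanSpace ℝ (Fin n) × EuclideanSpace ℝ (Fin n) → ℂ)
    (p : EuclideanSpace ℝ (Fin n) × EuclideanSpace ℝ (Fin n)) (j : Fin n) : ℂ :=
  fderiv ℝ f p (EuclideanSpace.single j 1, 0)

/-- Partial derivative in the `ξ`-variables of a function on `ℝⁿ × ℝⁿ`. -/
def Dxi (n : ℕ) (f : EuclideanSpace ℝ (Fin n) × EuclideanSpace ℝ (Fin n) → ℂ)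
    (p : EuclideanSpace ℝ (Fin n) × EuclideanSpace ℝ (Fin n)) (j : Fin n) : ℂ :=
  fderiv ℝ f p (0, EuclideanSpace.single j 1)

/-!
On `ξ ≠ 0` consider the one-form `ω = ∑ γ^k dξ_k - ∑ ρ_k dx_k` and the radial field
`R = ∑ ξ_k ∂/∂ξ_k`. The homogeneity hypotheses say that `ω` is invariant under the flow of `R`,
and the symmetry relations say that `dω` vanishes when contracted with a vertical vector. Cartan's
formula `0 = L_R ω = d(ι_R ω) + ι_R dω` then leaves `d(ι_R ω) = 0`, where `ι_R ω = ∑ ξ_k γ^k`.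
In coordinates, Euler's identity plays the role of `L_R ω = 0`.
-/

theorem isOpen_setOf_snd_ne_zero {X V : Type*} [TopologicalSpace X] [TopologicalSpace V]
    [T1Space V] [Zero V] : IsOpen {p : X × V | p.2 ≠ 0} :=
  isOpen_compl_singleton.preimage continuous_snd

theorem isPreconnected_setOf_snd_ne_zero {X V : Type*} [TopologicalSpace X] [PreconnectedSpace X]
    [AddCommGroup V] [Module ℝ V] [TopologicalSpace V] [ContinuousAdd V]
    [ContinuousSMul ℝ V] (hV : 1 < Module.rank ℝ V) :
    IsPreconnected {p : X × V | p.2 ≠ 0} := by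
  have eq_prod : {p : X × V | p.2 ≠ 0} = Set.univ ×ˢ {0}ᶜ := by ext; simp
  rw [eq_prod]
  exact isPreconnected_univ.prod (isConnected_compl_singleton_of_one_lt_rank hV 0).isPreconnected

theorem fderiv_apply_zero_snd_of_homogeneous {X V F : Type*} [NormedAddCommGroup X]
    [NormedSpace ℝ X] [NormedAddCommGroup V] [NormedSpace ℝ V] [NormedAddCommGroup F]
    [NormedSpace ℝ F] {f : X × V → F} {p : X × V} {m : ℝ}
    (hf : DifferentiableAt ℝ f p)
    (hom : ∀ μ : ℝ, 0 < μ → f (p.1, μ • p.2) = μ ^ m • f p) :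
    fderiv ℝ f p (0, p.2) = m • f p := by
  have hasDerivAt_ray : HasDerivAt (fun μ : ℝ => (p.1, μ • p.2)) (0, p.2) 1 := by
    simpa using (hasDerivAt_const (1 : ℝ) p.1).prodMk ((hasDerivAt_id (1 : ℝ)).smul_const p.2)
  have hasDerivAt_comp :
      HasDerivAt (fun μ : ℝ => f (p.1, μ • p.2)) (fderiv ℝ f p (0, p.2)) 1 :=
    hf.hasFDerivAt.comp_hasDerivAt_of_eq 1 hasDerivAt_ray (by simp)
  have hasDerivAt_pow : HasDerivAt (fun μ : ℝ => μ ^ m • f p) (m • f p) 1 := by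
    simpa using (Real.hasDerivAt_rpow_const (p := m) (Or.inl one_ne_zero)).smul_const (f p)
  refine hasDerivAt_comp.unique (hasDerivAt_pow.congr_of_eventuallyEq ?_)
  filter_upwards [lt_mem_nhds zero_lt_one] with μ hμ using hom μ hμ

theorem map_eq_sum_coord_smul {ι F : Type*} [Fintype ι] [DecidableEq ι] [AddCommGroup F]
    [Module ℝ F] (L : EuclideanSpace ℝ ι →ₗ[ℝ] F) (v : EuclideanSpace ℝ ι) :
    L v = ∑ k, v k • L (EuclideanSpace.single k 1) := by
  conv_lhs => rw [← (EuclideanSpace.basisFun ι ℝ).sum_repr v]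
  simp

section Coordinates

variable {n : ℕ} {f : EuclideanSpace ℝ (Fin n) × EuclideanSpace ℝ (Fin n) → ℂ}
  {γ : Fin n → EuclideanSpace ℝ (Fin n) × EuclideanSpace ℝ (Fin n) → ℂ}
  {p : EuclideanSpace ℝ (Fin n) × EuclideanSpace ℝ (Fin n)}

theorem fderiv_apply_eq_sum_Dx_add_sum_Dxi (u v : EuclideanSpace ℝ (Fin n)) :
    fderiv ℝ f p (u, v) = ∑ k, (u k : ℂ) * Dx n f p k + ∑ k, (v k : ℂ) * Dxi n f p k := by
  have horizontal := map_eq_sum_coord_smul (fderiv ℝ f p ∘L .inl ℝ _ _).toLinearMap u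
  have vertical := map_eq_sum_coord_smul (fderiv ℝ f p ∘L .inr ℝ _ _).toLinearMap v
  calc fderiv ℝ f p (u, v) = fderiv ℝ f p (u, 0) + fderiv ℝ f p (0, v) := by
        rw [← map_add, Prod.mk_add_mk, add_zero, zero_add]
    _ = _ := by simpa [Dx, Dxi] using congrArg₂ (· + ·) horizontal vertical

theorem fderiv_eq_zero_of_Dx_eq_zero_of_Dxi_eq_zero (hx : ∀ j, Dx n f p j = 0)
    (hξ : ∀ j, Dxi n f p j = 0) : fderiv ℝ f p = 0 :=
  ContinuousLinearMap.ext fun ⟨u, v⟩ => by simp [fderiv_apply_eq_sum_Dx_add_sum_Dxi, hx, hξ]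

theorem sum_coord_mul_Dxi_of_homogeneous {m : ℝ} (hf : DifferentiableAt ℝ f p)
    (hom : ∀ μ : ℝ, 0 < μ → f (p.1, μ • p.2) = μ ^ m • f p) :
    ∑ k, (p.2 k : ℂ) * Dxi n f p k = m * f p := by
  simpa [fderiv_apply_eq_sum_Dx_add_sum_Dxi] using fderiv_apply_zero_snd_of_homogeneous hf hom

/-- The contraction `∑ ξ_k γ^k` of a one-form with `dξ`-components `γ^k` with the radial field
`∑ ξ_k ∂/∂ξ_k`. -/
def radialContraction (γ : Fin n → EuclideanSpace ℝ (Fin n) × EuclideanSpace ℝ (Fin n) → ℂ)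
    (q : EuclideanSpace ℝ (Fin n) × EuclideanSpace ℝ (Fin n)) : ℂ :=
  ∑ k, (q.2 k : ℂ) * γ k q

theorem hasFDerivAt_radialContraction (hγ : ∀ k, DifferentiableAt ℝ (γ k) p) :
    HasFDerivAt (radialContraction γ)
      (∑ k, ((p.2 k : ℂ) • fderiv ℝ (γ k) p +
        γ k p • (Complex.ofRealCLM ∘L EuclideanSpace.proj k ∘L .snd ℝ _ _))) p :=
  HasFDerivAt.fun_sum fun k _ =>
    (Complex.ofRealCLM ∘L EuclideanSpace.proj k ∘L .snd ℝ _ _).hasFDerivAt.mul (hγ k).hasFDerivAt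

theorem Dx_radialContraction (hγ : ∀ k, DifferentiableAt ℝ (γ k) p) (j : Fin n) :
    Dx n (radialContraction γ) p j = ∑ k, (p.2 k : ℂ) * Dx n (γ k) p j := by
  simp [Dx, (hasFDerivAt_radialContraction hγ).fderiv]

theorem Dxi_radialContraction (hγ : ∀ k, DifferentiableAt ℝ (γ k) p) (j : Fin n) :
    Dxi n (radialContraction γ) p j = ∑ k, (p.2 k : ℂ) * Dxi n (γ k) p j + γ j p := by
  simp [Dxi, (hasFDerivAt_radialContraction hγ).fderiv, Finset.sum_add_distrib,
    apply_ite Complex.ofReal]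

theorem Dx_radialContraction_eq_zero (hγ : ∀ k, DifferentiableAt ℝ (γ k) p) {j : Fin n}
    (hf : DifferentiableAt ℝ f p)
    (hom : ∀ μ : ℝ, 0 < μ → f (p.1, μ • p.2) = f p)
    (symm : ∀ i, Dx n (γ i) p j = -Dxi n f p i) :
    Dx n (radialContraction γ) p j = 0 := by
  have euler : ∑ k, (p.2 k : ℂ) * Dxi n f p k = 0 := by
    simpa using sum_coord_mul_Dxi_of_homogeneous (m := 0) hf (by simpa using hom)
  calc Dx n (radialContraction γ) p j
      = ∑ k, (p.2 k : ℂ) * Dx n (γ k) p j := Dx_radialContraction hγ j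
    _ = -∑ k, (p.2 k : ℂ) * Dxi n f p k := by simp [symm]
    _ = 0 := by rw [euler, neg_zero]

theorem Dxi_radialContraction_eq_zero (hγ : ∀ k, DifferentiableAt ℝ (γ k) p) {j : Fin n}
    (hom : ∀ μ : ℝ, 0 < μ → γ j (p.1, μ • p.2) = (μ : ℂ)⁻¹ * γ j p)
    (symm : ∀ i, Dxi n (γ i) p j = Dxi n (γ j) p i) :
    Dxi n (radialContraction γ) p j = 0 := by
  have euler : ∑ k, (p.2 k : ℂ) * Dxi n (γ j) p k = -γ j p := by
    simpa using sum_coord_mul_Dxi_of_homogeneous (m := -1) (hγ j)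
      (by simpa [Real.rpow_neg_one] using hom)
  calc Dxi n (radialContraction γ) p j
      = ∑ k, (p.2 k : ℂ) * Dxi n (γ k) p j + γ j p := Dxi_radialContraction hγ j
    _ = ∑ k, (p.2 k : ℂ) * Dxi n (γ j) p k + γ j p := by simp only [symm]
    _ = 0 := by rw [euler, neg_add_cancel]

end Coordinates

theorem stmt_18_general (n : ℕ) (hn : 2 ≤ n)
    (γ ρ : Fin n → EuclideanSpace ℝ (Fin n) × EuclideanSpace ℝ (Fin n) → ℂ)
    (hγ : ∀ k, DifferentiableOn ℝ (γ k)
      {p : EuclideanSpace ℝ (Fin n) × EuclideanSpace ℝ (Fin n) | p.2 ≠ 0})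
    (hρ : ∀ k, DifferentiableOn ℝ (ρ k)
      {p : EuclideanSpace ℝ (Fin n) × EuclideanSpace ℝ (Fin n) | p.2 ≠ 0})
    (hγhom : ∀ k, ∀ μ : ℝ, 0 < μ → ∀ x : EuclideanSpace ℝ (Fin n),
      ∀ ξ : EuclideanSpace ℝ (Fin n), ξ ≠ 0 → γ k (x, μ • ξ) = (μ : ℂ)⁻¹ * γ k (x, ξ))
    (hρhom : ∀ k, ∀ μ : ℝ, 0 < μ → ∀ x : EuclideanSpace ℝ (Fin n),
      ∀ ξ : EuclideanSpace ℝ (Fin n), ξ ≠ 0 → ρ k (x, μ • ξ) = ρ k (x, ξ))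
    (hsym₁ : ∀ p ∈ {p : EuclideanSpace ℝ (Fin n) × EuclideanSpace ℝ (Fin n) | p.2 ≠ 0},
      ∀ i j, Dxi n (γ i) p j = Dxi n (γ j) p i)
    (hsym₂ : ∀ p ∈ {p : EuclideanSpace ℝ (Fin n) × EuclideanSpace ℝ (Fin n) | p.2 ≠ 0},
      ∀ i j, Dx n (γ i) p j = -Dxi n (ρ j) p i) :
    (∀ p ∈ {p : EuclideanSpace ℝ (Fin n) × EuclideanSpace ℝ (Fin n) | p.2 ≠ 0},
      fderiv ℝ (fun q : EuclideanSpace ℝ (Fin n) × EuclideanSpace ℝ (Fin n) =>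
        ∑ k, (q.2 k : ℂ) * γ k q) p = 0) ∧
    ∃ c : ℂ, ∀ p ∈ {p : EuclideanSpace ℝ (Fin n) × EuclideanSpace ℝ (Fin n) | p.2 ≠ 0},
      ∑ k, (p.2 k : ℂ) * γ k p = c := by
  have one_lt_rank : 1 < Module.rank ℝ (EuclideanSpace ℝ (Fin n)) := by
    rw [← Module.finrank_eq_rank, finrank_euclideanSpace_fin]
    exact_mod_cast hn
  have differentiable_γ := fun p hp k =>
    (hγ k).differentiableAt (isOpen_setOf_snd_ne_zero.mem_nhds (x := p) hp)
  have differentiable_ρ := fun p hp k =>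
    (hρ k).differentiableAt (isOpen_setOf_snd_ne_zero.mem_nhds (x := p) hp)
  have fderiv_eq_zero : ∀ p ∈ {p | p.2 ≠ 0}, fderiv ℝ (radialContraction γ) p = 0 := fun p hp =>
    fderiv_eq_zero_of_Dx_eq_zero_of_Dxi_eq_zero
      (fun j => Dx_radialContraction_eq_zero (differentiable_γ p hp) (differentiable_ρ p hp j)
        (fun μ hμ => hρhom j μ hμ p.1 p.2 hp) fun i => hsym₂ p hp i j)
      (fun j => Dxi_radialContraction_eq_zero (differentiable_γ p hp)
        (fun μ hμ => hγhom j μ hμ p.1 p.2 hp) fun i => hsym₁ p hp i j)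
  exact ⟨fderiv_eq_zero, isOpen_setOf_snd_ne_zero.exists_is_const_of_fderiv_eq_zero
    (isPreconnected_setOf_snd_ne_zero one_lt_rank)
    (fun p hp => (hasFDerivAt_radialContraction
      (differentiable_γ p hp)).differentiableAt.differentiableWithinAt)
    fderiv_eq_zero⟩

/-- let `n ≥ 2` and let `γ^k, ρ_k` be smooth on `ℝⁿ × (ℝⁿ∖{0})` with
`γ^k(x,μξ) = μ^{−1}γ^k(x,ξ)` and `ρ_k(x,μξ) = ρ_k(x,ξ)` for `μ > 0`, satisfying the
symmetry relations `∂γ^i/∂ξ_j = ∂γ^j/∂ξ_i` and `∂γ^i/∂x_j = −∂ρ_j/∂ξ_i`.  Then the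
function `(x,ξ) ↦ Σ_k ξ_k γ^k(x,ξ)` has vanishing differential on `ℝⁿ × (ℝⁿ∖{0})`, and
hence is constant there. -/
theorem stmt_18 (n : ℕ) (hn : 2 ≤ n)
    (γ ρ : Fin n → EuclideanSpace ℝ (Fin n) × EuclideanSpace ℝ (Fin n) → ℂ)
    (hγ : ∀ k, ContDiffOn ℝ (⊤ : ℕ∞) (γ k)
      {p : EuclideanSpace ℝ (Fin n) × EuclideanSpace ℝ (Fin n) | p.2 ≠ 0})
    (hρ : ∀ k, ContDiffOn ℝ (⊤ : ℕ∞) (ρ k)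
      {p : EuclideanSpace ℝ (Fin n) × EuclideanSpace ℝ (Fin n) | p.2 ≠ 0})
    (hγhom : ∀ k, ∀ μ : ℝ, 0 < μ → ∀ x : EuclideanSpace ℝ (Fin n),
      ∀ ξ : EuclideanSpace ℝ (Fin n), ξ ≠ 0 → γ k (x, μ • ξ) = (μ : ℂ)⁻¹ * γ k (x, ξ))
    (hρhom : ∀ k, ∀ μ : ℝ, 0 < μ → ∀ x : EuclideanSpace ℝ (Fin n),
      ∀ ξ : EuclideanSpace ℝ (Fin n), ξ ≠ 0 → ρ k (x, μ • ξ) = ρ k (x, ξ))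
    (hsym₁ : ∀ p ∈ {p : EuclideanSpace ℝ (Fin n) × EuclideanSpace ℝ (Fin n) | p.2 ≠ 0},
      ∀ i j, Dxi n (γ i) p j = Dxi n (γ j) p i)
    (hsym₂ : ∀ p ∈ {p : EuclideanSpace ℝ (Fin n) × EuclideanSpace ℝ (Fin n) | p.2 ≠ 0},
      ∀ i j, Dx n (γ i) p j = -Dxi n (ρ j) p i) :
    (∀ p ∈ {p : EuclideanSpace ℝ (Fin n) × EuclideanSpace ℝ (Fin n) | p.2 ≠ 0},
      fderiv ℝ (fun q : EuclideanSpace ℝ (Fin n) × EuclideanSpace ℝ (Fin n) =>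
        ∑ k, (q.2 k : ℂ) * γ k q) p = 0) ∧
    ∃ c : ℂ, ∀ p ∈ {p : EuclideanSpace ℝ (Fin n) × EuclideanSpace ℝ (Fin n) | p.2 ≠ 0},
      ∑ k, (p.2 k : ℂ) * γ k p = c :=
  stmt_18_general n hn γ ρ (fun k => (hγ k).differentiableOn (by simp))
    (fun k => (hρ k).differentiableOn (by simp)) hγhom hρhom hsym₁ hsym₂
end
end
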